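/- Structural congruence is sound for thread extraction: if the equation X = Y between PGA-programs is derivable from the axioms PGA1–PGA8, then the extracted threads |X| and |Y| are equal. -/

import Mathlib

/-- Primitive instructions over a set `A` of basic instructions:
basic instructions `a`, positive tests `+a`, negative tests `-a`,
jump instructions `#k` and the termination instruction `!`. -/
inductive PrimInstr (A : Type) : Type where
  | basic (a : A)
  | pos (a : A)
  | neg (a : A)
  | jump (k : Nat)
  | halt
deriving DecidableEq

/-- PGA-programs over `A`: primitive instructions, concatenation `X;Y`
and repetition `X^ω`. -/
inductive PGA (A : Type) : Type where
  | prim (u : PrimInstr A)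
  | seq (X Y : PGA A)
  | rep (X : PGA A)
deriving DecidableEq

/-- `X.pow n` is the power `X^n` for `n ≥ 1`: `X^1 = X` and `X^(n+1) = X ; X^n`.
(The value at `0` is irrelevant and set to `X`; all statements only use `n ≥ 1`.) -/
def PGA.pow {A : Type} (X : PGA A) : Nat → PGA A
  | 0 => X
  | 1 => X
  | n+2 => X.seq (X.pow (n+1))

/-- A SPI: a nonempty finite (list) or infinite (function) sequence of primitive
instructions.  (Nonemptiness always holds for denotations of PGA-programs.) -/
abbrev SPI (A : Type) : Type := List (PrimInstr A) ⊕ (ℕ → PrimInstr A)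

/-- Concatenation of SPIs; if the first one is infinite, it is the result. -/
def SPI.seqc {A : Type} : SPI A → SPI A → SPI A
  | .inl l, .inl l' => .inl (l ++ l')
  | .inl l, .inr s => .inr fun n => if h : n < l.length then l.get ⟨n, h⟩ else s (n - l.length)
  | .inr s, _ => .inr s

/-- Infinite repetition of a SPI; an infinite SPI is its own repetition.
(The `getD`-default is never relevant: SPIs of PGA-programs are nonempty.) -/
def SPI.omega {A : Type} : SPI A → SPI A
  | .inl l => .inr fun n => l.getD (n % l.length) .halt
  | .inr s => .inr s

/-- The SPI denoted by a PGA-program. -/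
def PGA.spi {A : Type} : PGA A → SPI A
  | .prim u => .inl [u]
  | .seq X Y => X.spi.seqc Y.spi
  | .rep X => X.spi.omega

/-- The instruction of a SPI at a (0-based) position, if any. -/
def SPI.at? {A : Type} : SPI A → ℕ → Option (PrimInstr A)
  | .inl l, n => l[n]?
  | .inr s, n => some (s n)

/-- The polynomial functor `X ↦ {S} ⊕ {D} ⊕ A × X × X` whose final coalgebra
is the type of threads. -/
def ThreadF (A : Type) : PFunctor.{0} :=
  ⟨Unit ⊕ Unit ⊕ A, fun s => match s with
    | .inl _ => Empty
    | .inr (.inl _) => Empty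
    | .inr (.inr _) => Bool⟩

/-- Threads over `A`: the final coalgebra (coinductive type) generated by
termination `S`, deadlock `D` and postconditional composition. -/
def ThreadT (A : Type) : Type := PFunctor.M (ThreadF A)

/-- The terminating thread `S`. -/
def ThreadT.S {A : Type} : ThreadT A := PFunctor.M.mk ⟨Sum.inl (), Empty.elim⟩

/-- The deadlocking (inactive) thread `D`. -/
def ThreadT.D {A : Type} : ThreadT A := PFunctor.M.mk ⟨Sum.inr (Sum.inl ()), Empty.elim⟩

/-- Postconditional composition `P ⊴ a ⊵ Q` (continue as `P` on reply `true`
to `a`, as `Q` on reply `false`).  Action prefix `a ∘ P` is `P ⊴ a ⊵ P`. -/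
def ThreadT.post {A : Type} (a : A) (P Q : ThreadT A) : ThreadT A :=
  PFunctor.M.mk ⟨Sum.inr (Sum.inr a), fun b => match b with | true => P | false => Q⟩

/-- The size of a proper jump instruction (`#m` with `m ≥ 1`), if any. -/
def jumpSize {A : Type} : Option (PrimInstr A) → Option ℕ
  | some (.jump (m+1)) => some (m+1)
  | _ => none

/-- Following the chain of (proper) jumps of `σ` starting at position `j`. -/
def jchain {A : Type} (σ : ℕ → Option (PrimInstr A)) (j : ℕ) : ℕ → ℕ
  | 0 => j
  | k+1 =>
    match jumpSize (σ (jchain σ j k)) with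
    | some m => jchain σ j k + m
    | none => jchain σ j k

open Classical in
/-- One step of thread extraction at position `j` of the instruction sequence `σ`:
first resolve the chain of jumps from `j` (an infinite chain of jumps yields
deadlock `D`, as does jumping outside of the sequence or reaching `#0`), then read
off the instruction: `!` gives `S`, a basic instruction `a` gives action prefix
with both continuations at the next position, a positive (negative) test gives
postconditional composition continuing at the next position upon `true` (`false`)
and at the position thereafter upon `false` (`true`). -/
noncomputable def xstep {A : Type} (σ : ℕ → Option (PrimInstr A)) (j : ℕ) :
    (ThreadF A).Obj ℕ :=
  haveI : DecidablePred fun k => jumpSize (σ (jchain σ j k)) = none := fun _ => inferInstance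
  if h : ∃ k, jumpSize (σ (jchain σ j k)) = none then
    let j' := jchain σ j (Nat.find h)
    match σ j' with
    | some .halt => ⟨Sum.inl (), Empty.elim⟩
    | some (.basic a) => ⟨Sum.inr (Sum.inr a), fun _ => j' + 1⟩
    | some (.pos a) => ⟨Sum.inr (Sum.inr a), fun b => match b with | true => j' + 1 | false => j' + 2⟩
    | some (.neg a) => ⟨Sum.inr (Sum.inr a), fun b => match b with | true => j' + 2 | false => j' + 1⟩
    | _ => ⟨Sum.inr (Sum.inl ()), Empty.elim⟩
  else ⟨Sum.inr (Sum.inl ()), Empty.elim⟩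

/-- Thread extraction from an instruction-lookup function, starting at
(0-based) position `j₀`. -/
noncomputable def extractFrom {A : Type} (σ : ℕ → Option (PrimInstr A)) (j₀ : ℕ) : ThreadT A :=
  PFunctor.M.corec (xstep σ) j₀

/-- Thread extraction `|X|` on PGA-programs: extraction along the SPI denoted
by `X`, starting at its first instruction.  This realizes exactly the defining
equations of thread extraction (Table 2 of the paper). -/
noncomputable def PGA.thread {A : Type} (X : PGA A) : ThreadT A :=
  extractFrom X.spi.at? 0

/-- `catP [u_1, …, u_n] X` is the program `u_1 ; … ; u_n ; X`. -/
def catP {A : Type} : List (PrimInstr A) → PGA A → PGA A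
  | [], X => X
  | u :: l, X => (PGA.prim u).seq (catP l X)

/-- `fromL u [v_1, …, v_n]` is the repetition-free program `u ; v_1 ; … ; v_n`. -/
def fromL {A : Type} : PrimInstr A → List (PrimInstr A) → PGA A
  | u, [] => .prim u
  | u, v :: l => (PGA.prim u).seq (fromL v l)

/-- `progYZw [u_1,…,u_n] v [w_1,…,w_m]` is the first canonical form
`u_1 ; … ; u_n ; (v ; w_1 ; … ; w_m)^ω` (just `(v ; w_1 ; … ; w_m)^ω` if `n = 0`). -/
def progYZw {A : Type} (l₁ : List (PrimInstr A)) (v : PrimInstr A)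
    (l₂ : List (PrimInstr A)) : PGA A :=
  catP l₁ (PGA.rep (fromL v l₂))

/-- Equational-logic derivability from the axioms PGA1-PGA8 of program algebra
(structural congruence).  In PGA5-PGA8, `u_i`, `v_j` range over primitive
instructions and `k`, `n`, `m` over natural numbers. -/
inductive DerivSC {A : Type} : PGA A → PGA A → Prop
  | refl (X : PGA A) : DerivSC X X
  | symm {X Y : PGA A} : DerivSC X Y → DerivSC Y X
  | trans {X Y Z : PGA A} : DerivSC X Y → DerivSC Y Z → DerivSC X Z
  | seq_congr {X X' Y Y' : PGA A} : DerivSC X X' → DerivSC Y Y' → DerivSC (X.seq Y) (X'.seq Y')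
  | rep_congr {X Y : PGA A} : DerivSC X Y → DerivSC X.rep Y.rep
  | pga1 (X Y Z : PGA A) : DerivSC ((X.seq Y).seq Z) (X.seq (Y.seq Z))
  | pga2 (X : PGA A) (n : ℕ) (hn : 1 ≤ n) : DerivSC ((X.pow n).rep) X.rep
  | pga3 (X Y : PGA A) : DerivSC (X.rep.seq Y) X.rep
  | pga4 (X Y : PGA A) : DerivSC ((X.seq Y).rep) (X.seq ((Y.seq X).rep))
  | pga5 (l : List (PrimInstr A)) :
      DerivSC (catP (.jump (l.length + 1) :: l) (.prim (.jump 0)))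
              (catP (.jump 0 :: l) (.prim (.jump 0)))
  | pga6 (l : List (PrimInstr A)) (m : ℕ) :
      DerivSC (catP (.jump (l.length + 1) :: l) (.prim (.jump m)))
              (catP (.jump (l.length + m + 1) :: l) (.prim (.jump m)))
  | pga7 (k : ℕ) (l : List (PrimInstr A)) :
      DerivSC (PGA.rep (fromL (.jump (k + l.length + 1)) l))
              (PGA.rep (fromL (.jump k) l))
  | pga8 (l₁ : List (PrimInstr A)) (v : PrimInstr A) (l₂ : List (PrimInstr A)) (k : ℕ) :
      DerivSC ((PGA.prim (.jump (l₁.length + l₂.length + k + 2))).seq (progYZw l₁ v l₂))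
              ((PGA.prim (.jump (l₁.length + k + 1))).seq (progYZw l₁ v l₂))

/-! Order threads by approximation, with deadlock `D` at the bottom. The threads extracted from the
positions of an instruction sequence form the least solution of the defining equations of thread
extraction, because an infinite chain of jumps yields `D`. Hence two sequences have the same threads
as soon as each family of threads solves the equations of the other sequence; likewise `s^ω` is
least among the `t` for which `s ; t` and `t` have the same threads. This makes "equal length, and
equal threads from every position in every right context" a congruence for concatenation and
repetition. PGA1-PGA4 are equalities of instruction sequences, PGA5, PGA6 and PGA8 concern only the
thread from the leading jump, and for PGA7 each of the two repetitions absorbs the body of the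
other. -/

namespace ThreadT
variable {A : Type}

/-- The two threads agree on their first step up to deadlock on the left, and their continuations
are related by `R`. -/
inductive ApproxStep (R : ThreadT A → ThreadT A → Prop) : ThreadT A → ThreadT A → Prop
  | deadlock (Q : ThreadT A) : ApproxStep R D Q
  | termination : ApproxStep R S S
  | postcond (a : A) {P P' Q Q' : ThreadT A} :
      R P P' → R Q Q' → ApproxStep R (post a P Q) (post a P' Q')

/-- The approximation order on threads, with least element `D`: `P` results from `Q` by replacing
subthreads by `D`. It is defined coinductively, as the greatest relation closed under
`ApproxStep`. -/
def Approx (P Q : ThreadT A) : Prop :=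
  ∃ R : ThreadT A → ThreadT A → Prop, (∀ P Q, R P Q → ApproxStep R P Q) ∧ R P Q

theorem Approx.step {P Q : ThreadT A} : Approx P Q → ApproxStep Approx P Q := by
  rintro ⟨R, hR, hPQ⟩
  cases hR P Q hPQ with
  | deadlock => exact .deadlock Q
  | termination => exact .termination
  | postcond a hP hQ => exact .postcond a ⟨R, hR, hP⟩ ⟨R, hR, hQ⟩

theorem post_ne_D {a : A} {P Q : ThreadT A} : post a P Q ≠ D :=
  fun h => nomatch PFunctor.M.mk_inj h

theorem post_ne_S {a : A} {P Q : ThreadT A} : post a P Q ≠ S :=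
  fun h => nomatch PFunctor.M.mk_inj h

theorem post_inj {a b : A} {P P' Q Q' : ThreadT A} (h : post a P Q = post b P' Q') :
    a = b ∧ P = P' ∧ Q = Q' := by
  obtain ⟨hab, hargs⟩ := Sigma.mk.inj_iff.mp (PFunctor.M.mk_inj h)
  obtain rfl : a = b := Sum.inr_injective (Sum.inr_injective hab)
  have hargs := eq_of_heq hargs
  exact ⟨rfl, congrFun hargs true, congrFun hargs false⟩

theorem Approx.eq_D {P : ThreadT A} (h : Approx P D) : P = D := by
  generalize hT : D = T at h
  cases h.step with
  | deadlock => exact hT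
  | termination => rfl
  | postcond => exact absurd hT.symm post_ne_D

theorem Approx.of_post {a : A} {P P' Q Q' : ThreadT A}
    (h : Approx (post a P Q) (post a P' Q')) : Approx P P' ∧ Approx Q Q' := by
  generalize hT : post a P Q = T, hT' : post a P' Q' = T' at h
  cases h.step with
  | deadlock => exact absurd hT post_ne_D
  | termination => exact absurd hT post_ne_S
  | postcond b hP hQ =>
    obtain ⟨-, rfl, rfl⟩ := post_inj hT
    obtain ⟨-, rfl, rfl⟩ := post_inj hT'
    exact ⟨hP, hQ⟩

theorem Approx.antisymm {P Q : ThreadT A} (hPQ : Approx P Q) (hQP : Approx Q P) : P = Q := by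
  refine PFunctor.M.bisim (fun P Q => Approx P Q ∧ Approx Q P) ?_ P Q ⟨hPQ, hQP⟩
  rintro P Q ⟨hPQ, hQP⟩
  cases hPQ.step with
  | deadlock =>
    obtain rfl := hQP.eq_D
    exact ⟨_, _, _, rfl, rfl, nofun⟩
  | termination => exact ⟨_, _, _, rfl, rfl, nofun⟩
  | postcond a hP hQ =>
    obtain ⟨hP', hQ'⟩ := hQP.of_post
    exact ⟨_, _, _, rfl, rfl, fun | true => ⟨hP, hP'⟩ | false => ⟨hQ, hQ'⟩⟩

/-- The thread of a sequence that starts with the instruction `u` (if any), where `P k` is the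
thread that remains after skipping `k` further instructions: the right-hand sides of the defining
equations of thread extraction. -/
def ofInstr (u : Option (PrimInstr A)) (P : ℕ → ThreadT A) : ThreadT A :=
  match u with
  | some .halt => S
  | some (.basic a) => post a (P 0) (P 0)
  | some (.pos a) => post a (P 0) (P 1)
  | some (.neg a) => post a (P 1) (P 0)
  | some (.jump (k + 1)) => P k
  | _ => D

theorem ApproxStep.ofInstr {R : ThreadT A → ThreadT A → Prop} {u : Option (PrimInstr A)}
    (hu : jumpSize u = none) {f g : ℕ → ThreadT A} (hfg : ∀ k, R (f k) (g k)) :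
    ApproxStep R (ofInstr u f) (ofInstr u g) :=
  match u, hu with
  | some .halt, _ => .termination
  | some (.basic a), _ => .postcond a (hfg 0) (hfg 0)
  | some (.pos a), _ => .postcond a (hfg 0) (hfg 1)
  | some (.neg a), _ => .postcond a (hfg 1) (hfg 0)
  | some (.jump 0), _ => .deadlock _
  | none, _ => .deadlock _

end ThreadT

open ThreadT

section Extraction
variable {A : Type} {σ τ : ℕ → Option (PrimInstr A)}

theorem exists_of_jumpSize_eq_some {u : Option (PrimInstr A)} {m : ℕ} (h : jumpSize u = some m) :
    ∃ k, m = k + 1 ∧ u = some (.jump (k + 1)) := by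
  rcases u with _ | _ | _ | _ | (_ | k) | _ <;> cases h
  exact ⟨k, rfl, rfl⟩

theorem jchain_succ_of_jumpSize_eq_some {j m : ℕ} (h : jumpSize (σ j) = some m) (k : ℕ) :
    jchain σ j (k + 1) = jchain σ (j + m) k := by
  induction k with
  | zero => simp only [jchain, h]
  | succ k ih => rw [jchain, ih, jchain]

/-- One step of thread extraction at a position `p` where the chain of jumps has been resolved and
the instruction `u` (if any) has been found. -/
def resolvedStep (u : Option (PrimInstr A)) (p : ℕ) : (ThreadF A).Obj ℕ :=
  match u with
  | some .halt => ⟨Sum.inl (), Empty.elim⟩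
  | some (.basic a) => ⟨Sum.inr (Sum.inr a), fun _ => p + 1⟩
  | some (.pos a) => ⟨Sum.inr (Sum.inr a), fun b => match b with | true => p + 1 | false => p + 2⟩
  | some (.neg a) => ⟨Sum.inr (Sum.inr a), fun b => match b with | true => p + 2 | false => p + 1⟩
  | _ => ⟨Sum.inr (Sum.inl ()), Empty.elim⟩

open Classical in
theorem xstep_of_exists {j : ℕ} (h : ∃ k, jumpSize (σ (jchain σ j k)) = none) :
    xstep σ j = resolvedStep (σ (jchain σ j (Nat.find h))) (jchain σ j (Nat.find h)) :=
  dif_pos h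

theorem xstep_of_not_exists {j : ℕ} (h : ¬∃ k, jumpSize (σ (jchain σ j k)) = none) :
    xstep σ j = resolvedStep none j :=
  dif_neg h

theorem mk_map_resolvedStep (f : ℕ → ThreadT A) {u : Option (PrimInstr A)}
    (hu : jumpSize u = none) (p : ℕ) :
    PFunctor.M.mk ((ThreadF A).map f (resolvedStep u p)) = ofInstr u fun k => f (p + k + 1) := by
  rcases u with _ | _ | _ | _ | (_ | k) | _
  case some.jump.succ => exact absurd hu nofun
  all_goals
    refine congrArg PFunctor.M.mk (Sigma.ext rfl (heq_of_eq (funext fun b => ?_)))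
    first | exact b.elim | cases b <;> rfl

theorem xstep_of_jumpSize_eq_some {j m : ℕ} (h : jumpSize (σ j) = some m) :
    xstep σ j = xstep σ (j + m) := by
  classical
  have chain := jchain_succ_of_jumpSize_eq_some h
  by_cases hex : ∃ k, jumpSize (σ (jchain σ (j + m) k)) = none
  · have hsucc : ∃ k, jumpSize (σ (jchain σ j (k + 1))) = none := by simpa only [chain] using hex
    have hex' : ∃ k, jumpSize (σ (jchain σ j k)) = none := hsucc.imp' (· + 1) fun _ => id
    have find_eq : Nat.find hex' = Nat.find hex + 1 := by
      rw [Nat.find_comp_succ hex' hsucc (by simp [jchain, h])]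
      simp only [chain]
    rw [xstep_of_exists hex, xstep_of_exists hex', find_eq, chain]
  · have hex' : ¬∃ k, jumpSize (σ (jchain σ j k)) = none := by
      rintro ⟨_ | k, hk⟩
      · simp [jchain, h] at hk
      · exact hex ⟨k, chain k ▸ hk⟩
    rw [xstep_of_not_exists hex, xstep_of_not_exists hex']
    rfl

theorem extractFrom_eq_mk (σ : ℕ → Option (PrimInstr A)) (j : ℕ) :
    extractFrom σ j = PFunctor.M.mk ((ThreadF A).map (extractFrom σ) (xstep σ j)) :=
  PFunctor.M.corec_def _ _

theorem extractFrom_eq_D_of_not_exists {j : ℕ}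
    (h : ¬∃ k, jumpSize (σ (jchain σ j k)) = none) : extractFrom σ j = D := by
  rw [extractFrom_eq_mk, xstep_of_not_exists h]
  exact mk_map_resolvedStep _ rfl j

theorem extractFrom_eq_ofInstr (σ : ℕ → Option (PrimInstr A)) (j : ℕ) :
    extractFrom σ j = ofInstr (σ j) fun k => extractFrom σ (j + k + 1) := by
  classical
  rcases h : jumpSize (σ j) with _ | m
  · have hex : ∃ k, jumpSize (σ (jchain σ j k)) = none := ⟨0, h⟩
    rw [extractFrom_eq_mk, xstep_of_exists hex, (Nat.find_eq_zero hex).mpr h]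
    exact mk_map_resolvedStep _ h j
  · obtain ⟨k, rfl, hσ⟩ := exists_of_jumpSize_eq_some h
    rw [extractFrom_eq_mk, xstep_of_jumpSize_eq_some h, ← extractFrom_eq_mk, hσ]
    rfl

theorem extractFrom_approx {x : ℕ} {f : ℕ → ThreadT A}
    (hf : ∀ i, f i = ofInstr (σ (x + i)) fun k => f (i + k + 1)) (i : ℕ) :
    Approx (extractFrom σ (x + i)) (f i) := by
  refine ⟨fun P Q => ∃ i, P = extractFrom σ (x + i) ∧ Q = f i, ?_, i, rfl, rfl⟩
  rintro _ _ ⟨i, rfl, rfl⟩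
  by_cases hex : ∃ k, jumpSize (σ (jchain σ (x + i) k)) = none
  · obtain ⟨k, hk⟩ := hex
    induction k generalizing i with
    | zero =>
      rw [extractFrom_eq_ofInstr, hf]
      exact ApproxStep.ofInstr hk fun k => ⟨i + k + 1, by simp only [add_assoc], rfl⟩
    | succ k ih =>
      rcases h : jumpSize (σ (x + i)) with _ | m
      · rw [extractFrom_eq_ofInstr, hf]
        exact ApproxStep.ofInstr h fun k => ⟨i + k + 1, by simp only [add_assoc], rfl⟩
      · rw [jchain_succ_of_jumpSize_eq_some h] at hk
        obtain ⟨m, rfl, hσ⟩ := exists_of_jumpSize_eq_some h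
        rw [extractFrom_eq_ofInstr, hf, hσ]
        simp only [add_assoc] at hk ⊢
        exact ih _ hk
  · rw [extractFrom_eq_D_of_not_exists hex]
    exact .deadlock _

theorem extractFrom_congr {x y : ℕ} (h : ∀ i, σ (x + i) = τ (y + i)) :
    extractFrom σ x = extractFrom τ y := by
  apply Approx.antisymm
  · refine extractFrom_approx (f := fun i => extractFrom τ (y + i)) (fun i => ?_) 0
    rw [h]
    simpa only [add_assoc] using extractFrom_eq_ofInstr τ (y + i)
  · refine extractFrom_approx (f := fun i => extractFrom σ (x + i)) (fun i => ?_) 0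
    rw [← h]
    simpa only [add_assoc] using extractFrom_eq_ofInstr σ (x + i)

end Extraction

namespace SPI
variable {A : Type}

local infixr:65 " ⨟ " => seqc

theorem at?_injective : Function.Injective (at? : SPI A → ℕ → Option (PrimInstr A)) := by
  rintro (l | s) (l' | s') h
  · exact congrArg Sum.inl (List.ext_getElem? (congrFun h))
  · exact absurd (congrFun h l.length) (by simp [at?])
  · exact absurd (congrFun h l'.length) (by simp [at?])
  · exact congrArg Sum.inr (funext fun n => Option.some_injective _ (congrFun h n))

theorem at?_seqc_left {l : List (PrimInstr A)} {n : ℕ} (hn : n < l.length) (t : SPI A) :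
    (.inl l ⨟ t).at? n = l[n]? := by
  cases t <;> simp [seqc, at?, hn, List.getElem?_append_left]

theorem at?_seqc_right (l : List (PrimInstr A)) (t : SPI A) (n : ℕ) :
    (.inl l ⨟ t).at? (l.length + n) = t.at? n := by
  cases t <;> simp [seqc, at?, List.getElem?_append_right]

theorem nil_seqc (t : SPI A) : .inl [] ⨟ t = t :=
  at?_injective <| funext fun n => by simpa using at?_seqc_right [] t n

theorem seqc_nil (s : SPI A) : s ⨟ .inl [] = s := by
  rcases s with l | s
  · exact congrArg Sum.inl l.append_nil
  · rfl

theorem seqc_assoc (r s t : SPI A) : (r ⨟ s) ⨟ t = r ⨟ s ⨟ t := by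
  match r, s, t with
  | .inr _, _, _ => rfl
  | .inl _, .inr _, _ => rfl
  | .inl r, .inl s, .inl t => exact congrArg Sum.inl (List.append_assoc r s t)
  | .inl r, .inl s, .inr t => exact congrArg Sum.inr (funext fun n => by grind)

theorem omega_seqc (s r : SPI A) : s.omega ⨟ r = s.omega := by
  cases s <;> rfl

theorem seqc_omega_self (s : SPI A) : s ⨟ s.omega = s.omega := by
  cases s with
  | inr => rfl
  | inl l =>
    refine at?_injective (funext fun n => ?_)
    rcases lt_or_ge n l.length with hn | hn
    · rw [at?_seqc_left hn]
      simp [omega, at?, Nat.mod_eq_of_lt hn, hn]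
    · obtain ⟨n, rfl⟩ := Nat.exists_eq_add_of_le hn
      rw [at?_seqc_right]
      simp [omega, at?]

theorem cons_seqc (u : PrimInstr A) (l : List (PrimInstr A)) (t : SPI A) :
    .inl (u :: l) ⨟ t = .inl [u] ⨟ .inl l ⨟ t :=
  seqc_assoc (.inl [u]) (.inl l) t

theorem omega_cons (u : PrimInstr A) (l : List (PrimInstr A)) :
    omega (.inl (u :: l)) = .inl [u] ⨟ .inl l ⨟ omega (.inl (u :: l)) := by
  rw [← cons_seqc, seqc_omega_self]

theorem seqc_ne_nil {s : SPI A} (hs : s ≠ .inl []) (t : SPI A) : s ⨟ t ≠ .inl [] := by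
  cases s <;> cases t <;> simp_all [seqc]

theorem omega_ne_nil (s : SPI A) : s.omega ≠ .inl [] := by
  cases s <;> nofun

theorem eq_omega_of_seqc_eq {s t : SPI A} (hs : s ≠ .inl []) (h : s ⨟ t = t) :
    t = s.omega := by
  cases s with
  | inr => exact h.symm
  | inl l =>
    have hl : 0 < l.length := List.length_pos_iff.mpr (by simpa using hs)
    refine at?_injective (funext fun n => ?_)
    induction n using Nat.strong_induction_on with | _ n ih
    rw [← h, ← seqc_omega_self]
    rcases lt_or_ge n l.length with hn | hn
    · rw [at?_seqc_left hn, at?_seqc_left hn]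
    · obtain ⟨n, rfl⟩ := Nat.exists_eq_add_of_le hn
      rw [at?_seqc_right, at?_seqc_right, ih n (by lia)]

theorem omega_seqc_comm {r s : SPI A} (h : r ⨟ s ≠ .inl []) :
    (r ⨟ s).omega = r ⨟ (s ⨟ r).omega :=
  (eq_omega_of_seqc_eq h <| by rw [seqc_assoc, ← seqc_assoc s, seqc_omega_self]).symm

/-- The number of instructions, `⊤` for an infinite SPI. -/
def length : SPI A → ℕ∞
  | .inl l => l.length
  | .inr _ => ⊤

theorem length_seqc (s t : SPI A) : (s ⨟ t).length = s.length + t.length := by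
  match s, t with
  | .inr _, _ => exact (top_add _).symm
  | .inl _, .inr _ => exact (add_top _).symm
  | .inl l, .inl l' => simp [seqc, length]

theorem extractFrom_seqc_add_length (l : List (PrimInstr A)) (t : SPI A) (j : ℕ) :
    extractFrom (.inl l ⨟ t).at? (l.length + j) = extractFrom t.at? j :=
  extractFrom_congr fun i => by rw [add_assoc, at?_seqc_right]

theorem extractFrom_seqc_congr (l : List (PrimInstr A)) {s t : SPI A}
    (h : ∀ j, extractFrom s.at? j = extractFrom t.at? j) (j : ℕ) :
    extractFrom (.inl l ⨟ s).at? j = extractFrom (.inl l ⨟ t).at? j := by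
  rcases lt_or_ge j l.length with hj | hj
  · rw [extractFrom_eq_ofInstr, extractFrom_eq_ofInstr _ j, at?_seqc_left hj, at?_seqc_left hj]
    exact congrArg (ofInstr l[j]?) (funext fun k => extractFrom_seqc_congr l h (j + k + 1))
  · obtain ⟨j, rfl⟩ := Nat.exists_eq_add_of_le hj
    rw [extractFrom_seqc_add_length, extractFrom_seqc_add_length, h]
termination_by l.length - j

theorem extractFrom_omega_add_length (l : List (PrimInstr A)) (j : ℕ) :
    extractFrom (omega (.inl l)).at? (l.length + j) = extractFrom (omega (.inl l)).at? j := by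
  conv_lhs => rw [← seqc_omega_self, extractFrom_seqc_add_length]

theorem extractFrom_singleton_seqc_succ (u : PrimInstr A) (t : SPI A) (j : ℕ) :
    extractFrom (.inl [u] ⨟ t).at? (j + 1) = extractFrom t.at? j := by
  rw [add_comm]
  exact extractFrom_seqc_add_length [u] t j

theorem extractFrom_singleton_seqc_zero (u : PrimInstr A) (t : SPI A) :
    extractFrom (.inl [u] ⨟ t).at? 0 = ofInstr (some u) (extractFrom t.at?) := by
  rw [extractFrom_eq_ofInstr, at?_seqc_left Nat.one_pos]
  simp only [zero_add, extractFrom_singleton_seqc_succ]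
  rfl

theorem extractFrom_jump_zero (t : SPI A) : extractFrom (.inl [.jump 0] ⨟ t).at? 0 = D :=
  extractFrom_singleton_seqc_zero _ t

theorem extractFrom_jump_succ (k : ℕ) (t : SPI A) :
    extractFrom (.inl [.jump (k + 1)] ⨟ t).at? 0 = extractFrom t.at? k :=
  extractFrom_singleton_seqc_zero _ t

theorem extractFrom_jump_self (k : ℕ) (t : SPI A) :
    extractFrom (.inl [.jump k] ⨟ t).at? k = extractFrom (.inl [.jump k] ⨟ t).at? 0 := by
  cases k with
  | zero => rfl
  | succ k => rw [extractFrom_jump_succ, extractFrom_singleton_seqc_succ]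

theorem extractFrom_jump_over (l : List (PrimInstr A)) (k : ℕ) (t : SPI A) :
    extractFrom (.inl [.jump (l.length + k + 1)] ⨟ .inl l ⨟ t).at? 0 = extractFrom t.at? k := by
  rw [extractFrom_jump_succ, extractFrom_seqc_add_length]

theorem extractFrom_omega_approx {l : List (PrimInstr A)} {t : SPI A} (hl : l ≠ [])
    (h : ∀ j, extractFrom (.inl l ⨟ t).at? j = extractFrom t.at? j) (j : ℕ) :
    Approx (extractFrom (omega (.inl l)).at? j) (extractFrom t.at? j) := by
  have hpos : 0 < l.length := List.length_pos_iff.mpr hl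
  have solves (j : ℕ) : extractFrom t.at? j =
      ofInstr ((omega (.inl l)).at? j) fun k => extractFrom t.at? (j + k + 1) := by
    induction j using Nat.strong_induction_on with | _ j ih
    rw [← seqc_omega_self]
    rcases lt_or_ge j l.length with hj | hj
    · rw [← h, extractFrom_eq_ofInstr, at?_seqc_left hj, at?_seqc_left hj]
      simp only [h]
    · obtain ⟨j, rfl⟩ := Nat.exists_eq_add_of_le hj
      have shift (i : ℕ) : extractFrom t.at? (l.length + i) = extractFrom t.at? i := by
        rw [← h, extractFrom_seqc_add_length]
      simp only [at?_seqc_right, add_assoc, shift]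
      exact ih j (by lia)
  simpa only [zero_add] using
    extractFrom_approx (x := 0) (by simpa only [zero_add] using solves) j

theorem extractFrom_omega_approx_of_head {u v : PrimInstr A} {l : List (PrimInstr A)}
    (h : extractFrom (.inl [u] ⨟ .inl l ⨟ omega (.inl (v :: l))).at? 0 =
      extractFrom (omega (.inl (v :: l))).at? 0) (j : ℕ) :
    Approx (extractFrom (omega (.inl (u :: l))).at? j)
      (extractFrom (omega (.inl (v :: l))).at? j) := by
  refine extractFrom_omega_approx (List.cons_ne_nil u l) (fun j => ?_) j
  rw [cons_seqc]
  cases j with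
  | zero => exact h
  | succ j =>
    conv_rhs => rw [omega_cons]
    rw [extractFrom_singleton_seqc_succ, extractFrom_singleton_seqc_succ]

theorem extractFrom_omega_jump_long (k : ℕ) (l : List (PrimInstr A)) :
    extractFrom (omega (.inl (.jump (k + l.length + 1) :: l))).at? 0 =
      extractFrom (omega (.inl (.jump (k + l.length + 1) :: l))).at? k := by
  conv_lhs => rw [omega_cons, add_comm k, extractFrom_jump_over, add_comm _ k]

theorem extractFrom_omega_jump_short (k : ℕ) (l : List (PrimInstr A)) :
    extractFrom (omega (.inl (.jump k :: l))).at? k =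
      extractFrom (omega (.inl (.jump k :: l))).at? 0 := by
  rw [omega_cons, extractFrom_jump_self]

theorem extractFrom_omega_jump_add_length (k : ℕ) (l : List (PrimInstr A)) (j : ℕ) :
    extractFrom (omega (.inl (.jump (k + l.length + 1) :: l))).at? j =
      extractFrom (omega (.inl (.jump k :: l))).at? j := by
  have long_le_short := extractFrom_omega_approx_of_head (u := .jump (k + l.length + 1)) (l := l)
    (v := .jump k) (by
      rw [add_comm k, extractFrom_jump_over, extractFrom_omega_jump_short])
  have short_le_long := extractFrom_omega_approx_of_head (u := .jump k) (l := l)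
    (v := .jump (k + l.length + 1)) (by
      cases k with
      | zero =>
        have long_le_D := long_le_short 0
        rw [omega_cons (.jump 0), extractFrom_jump_zero] at long_le_D
        rw [extractFrom_jump_zero, long_le_D.eq_D]
      | succ k =>
        rw [extractFrom_omega_jump_long]
        conv_rhs => rw [omega_cons]
        rw [extractFrom_jump_succ, extractFrom_singleton_seqc_succ])
  exact (long_le_short j).antisymm (short_le_long j)

/-- Interchangeability of SPIs with respect to thread extraction: equal length, and equal threads
from every position, whatever follows. It is the congruence on SPIs that validates PGA1-PGA8. -/
structure Cong (s t : SPI A) : Prop where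
  length_eq : s.length = t.length
  extract_eq (r : SPI A) (j : ℕ) : extractFrom (s ⨟ r).at? j = extractFrom (t ⨟ r).at? j

namespace Cong
variable {s s' t t' u : SPI A}

theorem of_eq (h : s = t) : Cong s t :=
  h ▸ ⟨rfl, fun _ _ => rfl⟩

theorem symm (h : Cong s t) : Cong t s :=
  ⟨h.length_eq.symm, fun r j => (h.extract_eq r j).symm⟩

theorem trans (hst : Cong s t) (htu : Cong t u) : Cong s u :=
  ⟨hst.length_eq.trans htu.length_eq, fun r j => (hst.extract_eq r j).trans (htu.extract_eq r j)⟩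

theorem seqc_right (h : Cong s t) (u : SPI A) : Cong (s ⨟ u) (t ⨟ u) where
  length_eq := by rw [length_seqc, length_seqc, h.length_eq]
  extract_eq r j := by rw [seqc_assoc, seqc_assoc, h.extract_eq]

theorem seqc_left (u : SPI A) (h : Cong s t) : Cong (u ⨟ s) (u ⨟ t) where
  length_eq := by rw [length_seqc, length_seqc, h.length_eq]
  extract_eq r j := by
    rw [seqc_assoc, seqc_assoc]
    cases u with
    | inr => rfl
    | inl l => exact extractFrom_seqc_congr l (h.extract_eq r) j

theorem extractFrom_omega_approx {l l' : List (PrimInstr A)} (hl : l ≠ [])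
    (h : Cong (.inl l) (.inl l')) (j : ℕ) :
    Approx (extractFrom (SPI.omega (.inl l)).at? j) (extractFrom (SPI.omega (.inl l')).at? j) :=
  SPI.extractFrom_omega_approx hl (fun j => by rw [h.extract_eq, seqc_omega_self]) j

theorem omega (h : Cong s t) : Cong s.omega t.omega := by
  match s, t with
  | .inr _, .inr _ => exact h
  | .inl _, .inr _ => exact absurd h.length_eq (ENat.natCast_ne_top _)
  | .inr _, .inl _ => exact absurd h.length_eq.symm (ENat.natCast_ne_top _)
  | .inl l, .inl l' =>
    have hlen : l.length = l'.length := Nat.cast_injective h.length_eq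
    rcases eq_or_ne l [] with rfl | hl
    · rw [List.length_eq_zero_iff.mp hlen.symm]
      exact of_eq rfl
    · have hl' : l' ≠ [] := by
        rwa [← List.length_pos_iff, ← hlen, List.length_pos_iff]
      refine ⟨rfl, fun r j => ?_⟩
      rw [omega_seqc, omega_seqc]
      exact (h.extractFrom_omega_approx hl j).antisymm (h.symm.extractFrom_omega_approx hl' j)

theorem of_head {u v : PrimInstr A}
    (h : ∀ r, extractFrom (.inl [u] ⨟ t ⨟ r).at? 0 = extractFrom (.inl [v] ⨟ t ⨟ r).at? 0) :
    Cong (.inl [u] ⨟ t) (.inl [v] ⨟ t) where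
  length_eq := by rw [length_seqc, length_seqc]; rfl
  extract_eq r j := by
    rw [seqc_assoc, seqc_assoc]
    cases j with
    | zero => exact h r
    | succ j => rw [extractFrom_singleton_seqc_succ, extractFrom_singleton_seqc_succ]

theorem jump_to_deadlock (l : List (PrimInstr A)) :
    Cong (.inl [.jump (l.length + 1)] ⨟ .inl l ⨟ .inl [.jump 0])
      (.inl [.jump 0] ⨟ .inl l ⨟ .inl [.jump 0]) :=
  of_head fun r => by
    rw [seqc_assoc, extractFrom_jump_over l 0, extractFrom_jump_zero, extractFrom_jump_zero]

theorem jump_to_jump (l : List (PrimInstr A)) (m : ℕ) :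
    Cong (.inl [.jump (l.length + 1)] ⨟ .inl l ⨟ .inl [.jump m])
      (.inl [.jump (l.length + m + 1)] ⨟ .inl l ⨟ .inl [.jump m]) :=
  of_head fun r => by
    rw [seqc_assoc, extractFrom_jump_over l 0, extractFrom_jump_over, extractFrom_jump_self]

theorem jump_over_period (l₁ l₂ : List (PrimInstr A)) (k : ℕ) :
    Cong (.inl [.jump (l₁.length + (l₂.length + k) + 1)] ⨟ .inl l₁ ⨟ SPI.omega (.inl l₂))
      (.inl [.jump (l₁.length + k + 1)] ⨟ .inl l₁ ⨟ SPI.omega (.inl l₂)) :=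
  of_head fun r => by
    rw [seqc_assoc, omega_seqc, extractFrom_jump_over, extractFrom_jump_over,
      extractFrom_omega_add_length]

theorem omega_jump_add_length (k : ℕ) (l : List (PrimInstr A)) :
    Cong (SPI.omega (.inl (.jump (k + l.length + 1) :: l))) (SPI.omega (.inl (.jump k :: l))) where
  length_eq := rfl
  extract_eq r j := by
    rw [omega_seqc, omega_seqc]
    exact extractFrom_omega_jump_add_length k l j

end Cong

end SPI

namespace PGA
variable {A : Type}

theorem spi_ne_nil (X : PGA A) : X.spi ≠ .inl [] := by
  induction X with
  | prim u => nofun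
  | seq X Y hX => exact SPI.seqc_ne_nil hX Y.spi
  | rep X => exact X.spi.omega_ne_nil

theorem spi_pow_seqc_omega (X : PGA A) (n : ℕ) :
    (X.pow n).spi.seqc X.spi.omega = X.spi.omega := by
  match n with
  | 0 | 1 => exact X.spi.seqc_omega_self
  | n + 2 =>
    rw [pow, spi, SPI.seqc_assoc, X.spi_pow_seqc_omega (n + 1), SPI.seqc_omega_self]

theorem spi_pow_omega (X : PGA A) (n : ℕ) : (X.pow n).spi.omega = X.spi.omega :=
  (SPI.eq_omega_of_seqc_eq (X.pow n).spi_ne_nil (X.spi_pow_seqc_omega n)).symm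

theorem spi_catP (l : List (PrimInstr A)) (X : PGA A) :
    (catP l X).spi = SPI.seqc (.inl l) X.spi := by
  induction l with
  | nil => exact (SPI.nil_seqc _).symm
  | cons u l ih => rw [catP, spi, ih, SPI.cons_seqc]; rfl

theorem spi_fromL (u : PrimInstr A) (l : List (PrimInstr A)) :
    (fromL u l).spi = .inl (u :: l) := by
  induction l generalizing u with
  | nil => rfl
  | cons v l ih => rw [fromL, spi, ih]; rfl

end PGA

theorem DerivSC.cong {A : Type} {X Y : PGA A} (h : DerivSC X Y) : SPI.Cong X.spi Y.spi := by
  induction h with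
  | refl => exact .of_eq rfl
  | symm _ ih => exact ih.symm
  | trans _ _ ihXY ihYZ => exact ihXY.trans ihYZ
  | seq_congr _ _ ihX ihY => exact (ihX.seqc_right _).trans (ihY.seqc_left _)
  | rep_congr _ ih => exact ih.omega
  | pga1 X Y Z => exact .of_eq (SPI.seqc_assoc ..)
  | pga2 X n => exact .of_eq (X.spi_pow_omega n)
  | pga3 X Y => exact .of_eq (SPI.omega_seqc ..)
  | pga4 X Y => exact .of_eq (SPI.omega_seqc_comm (X.seq Y).spi_ne_nil)
  | pga5 l => simpa only [catP, PGA.spi, PGA.spi_catP] using SPI.Cong.jump_to_deadlock l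
  | pga6 l m => simpa only [catP, PGA.spi, PGA.spi_catP] using SPI.Cong.jump_to_jump l m
  | pga7 k l => simpa only [PGA.spi, PGA.spi_fromL] using SPI.Cong.omega_jump_add_length k l
  | pga8 l₁ v l₂ k =>
    have offset : l₁.length + l₂.length + k + 2 = l₁.length + ((v :: l₂).length + k) + 1 := by
      rw [List.length_cons]; lia
    simpa only [progYZw, PGA.spi, PGA.spi_catP, PGA.spi_fromL, offset] using
      SPI.Cong.jump_over_period l₁ (v :: l₂) k

/-- Structural congruence is sound for thread extraction: provably equal
programs (from PGA1-PGA8) have equal extracted threads. -/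
theorem structural_congruence_sound_for_threads (A : Type) (X Y : PGA A)
    (h : DerivSC X Y) : X.thread = Y.thread := by
  simpa only [PGA.thread, SPI.seqc_nil] using h.cong.extract_eq (.inl []) 0
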